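/- Let N₁ : ℝ → ℝ satisfy N₁(G) ≥ 2 for all large G and ∫₂^{N₁(G)} (−P(t)) dt = a·G + O(1) as G → ∞. Let g : ℝ → ℝ satisfy (i) g(T) − T ∼ (1−c)·T/ln T as T → ∞, and (ii) for every fixed l > 0, ∫_{g(T)}^{g(T+2l)} |ζ(1/2+it)|² dt = (1+o(1))·2l·ln T as T → ∞. Then the following two statements are equivalent: (A) for all positive integers x, y, z and every integer n ≥ 3, writing F = (xⁿ + yⁿ)/zⁿ, one has lim_{τ→∞} (1/τ)·{ [∫_{N₁(Fτ)}^{N₁(g(Fτ))} (−P(t)) dt] · [∫_{g(Fτ)}^{g(Fτ + 1/(a(1−c)))} |ζ(1/2+it)|² dt] } ≠ 1; (B) for all positive integers x, y, z and every integer n ≥ 3, xⁿ + yⁿ ≠ zⁿ (the Fermat–Wiles theorem). -/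

import Mathlib

/-!
Put `F = (xⁿ + yⁿ) / zⁿ`. The bracketed quantity is the product of two integrals taken at `T = F τ`.
Since `∫₂^{N₁ G} (-P) = a G + O(1)`, the first integral is `a (g T - T) + O(1)`, hence
asymptotic to `a (1 - c) T / log T`; property (ii) with `2 l = 1 / (a (1 - c))` makes the second one
asymptotic to `log T / (a (1 - c))`. Their product is therefore asymptotic to `T = F τ`, so the
limit exists and equals `F` (`tendsto_product`, `tendsto_rational`). By uniqueness of limits it is
different from `1` exactly when `F ≠ 1`, that is, when `xⁿ + yⁿ ≠ zⁿ`.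
-/

open Filter Real Asymptotics MeasureTheory

noncomputable def pichar (t : ℝ) : ℝ := (Nat.primeCounting ⌊t⌋₊ : ℝ)

noncomputable def P (t : ℝ) : ℝ := pichar t - ∫ u in (2:ℝ)..t, 1 / Real.log u

noncomputable def a : ℝ := Real.exp 4.5

noncomputable def c : ℝ := Real.eulerMascheroniConstant

noncomputable def Z (t : ℝ) : ℝ := ‖riemannZeta (1/2 + (t : ℂ) * Complex.I)‖ ^ 2

lemma one_sub_c_pos : 0 < 1 - c := by
  have := Real.eulerMascheroniConstant_lt_two_thirds
  unfold c
  linarith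

lemma a_pos : 0 < a := Real.exp_pos _

lemma pichar_monotone : Monotone pichar := fun s t h => by
  unfold pichar
  exact_mod_cast Nat.monotone_primeCounting (Nat.floor_mono h)

/-- The integrability that makes `∫ (-P)` additive over adjacent intervals in `[2, ∞)`. -/
lemma intervalIntegrable_neg_P {b : ℝ} (hb : 2 ≤ b) :
    IntervalIntegrable (fun t => -P t) volume 2 b := by
  have hlog : ContinuousOn (fun u : ℝ => 1 / Real.log u) (Set.uIcc 2 b) := by
    rw [Set.uIcc_of_le hb]
    intro u hu
    have h1 : 1 < u := by linarith [hu.1]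
    have : Real.log u ≠ 0 := (Real.log_pos h1).ne'
    exact (continuousAt_const.div (Real.continuousAt_log (by linarith)) this).continuousWithinAt
  have hprim : ContinuousOn (fun t => ∫ u in (2:ℝ)..t, 1 / Real.log u) (Set.uIcc 2 b) :=
    intervalIntegral.continuousOn_primitive_interval
      ((intervalIntegrable_iff').1 hlog.intervalIntegrable)
  exact (pichar_monotone.intervalIntegrable.sub hprim.intervalIntegrable).neg

lemma isLittleO_one_div_log :
    (fun _ : ℝ => (1:ℝ)) =o[atTop] (fun T => a * ((1 - c) * T / Real.log T)) := by
  have h : (fun _ : ℝ => (1:ℝ)) =o[atTop] (fun T => T / Real.log T) := by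
    have h1 := (isBigO_refl (fun T : ℝ => (Real.log T)⁻¹) atTop).mul_isLittleO
      Real.isLittleO_log_id_atTop
    refine h1.congr' ?_ ?_
    · filter_upwards [eventually_gt_atTop 1] with T hT
      exact inv_mul_cancel₀ (Real.log_pos hT).ne'
    · filter_upwards with T
      simp [div_eq_inv_mul]
  have hk : a * (1 - c) ≠ 0 := (mul_pos a_pos one_sub_c_pos).ne'
  refine (h.const_mul_right hk).congr_right fun T => ?_
  ring

/-- The first integral is `a (g T - T) + O(1)`, and the `O(1)` is negligible. -/
lemma isEquivalent_first (N₁ : ℝ → ℝ)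
    (hN2 : ∀ᶠ G in atTop, 2 ≤ N₁ G)
    (hN : (fun G => (∫ t in (2:ℝ)..N₁ G, -P t) - a * G) =O[atTop] (fun _ => (1:ℝ)))
    (g : ℝ → ℝ) (hg : Tendsto g atTop atTop)
    (hg1 : (fun T => g T - T) ~[atTop] (fun T => (1 - c) * T / Real.log T)) :
    (fun T => ∫ t in N₁ T..N₁ (g T), -P t) ~[atTop]
      (fun T => a * ((1 - c) * T / Real.log T)) := by
  have hmain : (fun T => a * (g T - T)) ~[atTop] (fun T => a * ((1 - c) * T / Real.log T)) :=
    (IsEquivalent.refl (u := fun _ : ℝ => a)).mul hg1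
  have herr := (hN.comp_tendsto hg).sub hN
  refine (hmain.add_isLittleO (herr.trans_isLittleO isLittleO_one_div_log)).congr_left ?_
  filter_upwards [hN2, hg.eventually hN2] with T h1 h2
  have := intervalIntegral.integral_interval_sub_left
    (intervalIntegrable_neg_P h2) (intervalIntegrable_neg_P h1)
  rw [← this]
  simp only [Pi.add_apply, Function.comp_apply]
  ring

/-- The correction `g T - T` is eventually positive, so `g T ≥ T` for large `T`. -/
lemma tendsto_g (g : ℝ → ℝ)
    (hg1 : (fun T => g T - T) ~[atTop] (fun T => (1 - c) * T / Real.log T)) :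
    Tendsto g atTop atTop := by
  obtain ⟨u, hu, h⟩ := hg1.exists_eq_mul
  refine tendsto_atTop_mono' _ ?_ tendsto_id
  filter_upwards [h, hu.eventually (lt_mem_nhds one_pos), eventually_gt_atTop 1] with T h1 h2 h3
  have hpos : 0 < (1 - c) * T / Real.log T :=
    div_pos (mul_pos one_sub_c_pos (by linarith)) (Real.log_pos h3)
  have : 0 < g T - T := by
    rw [h1]
    exact mul_pos h2 hpos
  simp only [id]
  linarith

lemma tendsto_product (N₁ : ℝ → ℝ)
    (hN2 : ∀ᶠ G in atTop, 2 ≤ N₁ G)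
    (hN : (fun G => (∫ t in (2:ℝ)..N₁ G, -P t) - a * G) =O[atTop] (fun _ => (1:ℝ)))
    (g : ℝ → ℝ)
    (hg1 : (fun T => g T - T) ~[atTop] (fun T => (1 - c) * T / Real.log T))
    (hg2 : ∀ l : ℝ, 0 < l →
      (fun T => ∫ t in g T..g (T + 2 * l), Z t) ~[atTop] (fun T => 2 * l * Real.log T)) :
    Tendsto (fun T => (1 / T) * ((∫ t in N₁ T..N₁ (g T), -P t) *
      ∫ t in g T..g (T + 1 / (a * (1 - c))), Z t)) atTop (nhds 1) := by
  have ha := a_pos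
  have hc := one_sub_c_pos
  have h1 := isEquivalent_first N₁ hN2 hN g (tendsto_g g hg1) hg1
  have h2 := hg2 (1 / (a * (1 - c)) / 2) (by positivity)
  rw [mul_div_cancel₀ _ (two_ne_zero' ℝ)] at h2
  have h3 := (IsEquivalent.refl (u := fun T : ℝ => 1 / T) (l := atTop)).mul (h1.mul h2)
  refine (IsEquivalent.congr_right h3 ?_).tendsto_const
  filter_upwards [eventually_gt_atTop 1] with T hT
  have hl : Real.log T ≠ 0 := (Real.log_pos hT).ne'
  have hT0 : T ≠ 0 := by linarith
  simp only [Pi.mul_apply, Function.const_apply]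
  field_simp

/-- Rescaling `T = F τ` turns the limit `1` of `tendsto_product` into the limit `F`. -/
lemma tendsto_rational (h : ℝ → ℝ) (hh : Tendsto (fun T => (1 / T) * h T) atTop (nhds 1))
    {F : ℝ} (hF : 0 < F) : Tendsto (fun τ => (1 / τ) * h (F * τ)) atTop (nhds F) := by
  have h1 := (hh.comp (tendsto_id.const_mul_atTop hF)).const_mul F
  rw [mul_one] at h1
  refine h1.congr fun τ => ?_
  simp only [Function.comp_apply, id]
  field_simp

/-- Theorem 3: the first `Pζ`-condition on the set of all Fermat rationals is
equivalent to the Fermat–Wiles theorem. -/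
theorem stmt_9 (N₁ : ℝ → ℝ)
    (hN2 : ∀ᶠ G in atTop, 2 ≤ N₁ G)
    (hN : (fun G => (∫ t in (2:ℝ)..N₁ G, -P t) - a * G) =O[atTop] (fun _ => (1:ℝ)))
    (g : ℝ → ℝ)
    (hg1 : (fun T => g T - T) ~[atTop] (fun T => (1 - c) * T / Real.log T))
    (hg2 : ∀ l : ℝ, 0 < l →
      (fun T => ∫ t in g T..g (T + 2 * l), Z t) ~[atTop] (fun T => 2 * l * Real.log T)) :
    (∀ x y z n : ℕ, 0 < x → 0 < y → 0 < z → 3 ≤ n →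
      ¬ Tendsto (fun τ => (1 / τ) *
        ((∫ t in N₁ (((x ^ n + y ^ n : ℝ) / (z ^ n : ℝ)) * τ)..
            N₁ (g (((x ^ n + y ^ n : ℝ) / (z ^ n : ℝ)) * τ)), -P t) *
          ∫ t in g (((x ^ n + y ^ n : ℝ) / (z ^ n : ℝ)) * τ)..
            g (((x ^ n + y ^ n : ℝ) / (z ^ n : ℝ)) * τ + 1 / (a * (1 - c))), Z t))
        atTop (nhds 1)) ↔
    (∀ x y z n : ℕ, 0 < x → 0 < y → 0 < z → 3 ≤ n → x ^ n + y ^ n ≠ z ^ n) := by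
  have key := tendsto_product N₁ hN2 hN g hg1 hg2
  refine forall₄_congr fun x y z n => forall₄_congr fun hx hy hz _ => not_congr ?_
  have hx' : (0:ℝ) < x := by exact_mod_cast hx
  have hy' : (0:ℝ) < y := by exact_mod_cast hy
  have hz' : (0:ℝ) < z := by exact_mod_cast hz
  have hF : (0:ℝ) < ((x:ℝ) ^ n + (y:ℝ) ^ n) / (z:ℝ) ^ n := by positivity
  have hlim := tendsto_rational _ key hF
  have hiff : ((x:ℝ) ^ n + (y:ℝ) ^ n) / (z:ℝ) ^ n = 1 ↔ x ^ n + y ^ n = z ^ n := by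
    rw [div_eq_one_iff_eq (by positivity)]
    exact_mod_cast Iff.rfl
  rw [← hiff]
  refine ⟨fun h => tendsto_nhds_unique hlim h, fun h => ?_⟩
  have hlim' := hlim
  rw [show nhds (((x:ℝ) ^ n + (y:ℝ) ^ n) / (z:ℝ) ^ n) = nhds 1 by rw [h]] at hlim'
  exact hlim'
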